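/- arXiv:2510.24861 — 4 statements merged into one kernel-verified Lean document; each statement's English description precedes it below -/
import Mathlib

section
/- Let ι_l, ι_r, ι_c be finite index sets and let 𝒳 : ι_l × ι_r × ι_c → ℂ be a third-order tensor (the three groups of modes being the left child α_l, the right child α_r, and the complement of α = α_l ∪ α_r). Define the matricizations X^l ∈ ℂ^{ι_l × (ι_r × ι_c)} by X^l(i_l,(j_r,j_c)) = 𝒳(i_l,j_r,j_c) and X^r ∈ ℂ^{ι_r × (ι_l × ι_c)} by X^r(i_r,(j_l,j_c)) = 𝒳(j_l,i_r,j_c). Then there exists a coefficient array B : (ι_r × ι_c) × (ι_l × ι_c) × ι_c → ℂ such that for all i_l, i_r, i_c: 𝒳(i_l,i_r,i_c) = Σ_{p ∈ ι_l×ι_c} Σ_{q ∈ ι_r×ι_c} X^l(i_l,p) · X^r(i_r,q) · B(q,p,i_c). In particular, every column of the α-matricization X^{α} ∈ ℂ^{(ι_l×ι_r) × ι_c} lies in the column span of the Kronecker product X^r ⊗ X^l. -/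
/-- Every linear map between vector spaces has a generalized inverse. -/
theorem LinearMap.exists_comp_comp_eq_self {K V W : Type*} [Field K] [AddCommGroup V] [Module K V]
    [AddCommGroup W] [Module K W] (f : V →ₗ[K] W) :
    ∃ g : W →ₗ[K] V, f ∘ₗ g ∘ₗ f = f := by
  obtain ⟨s, hs⟩ := f.rangeRestrict.exists_rightInverse_of_surjective f.range_rangeRestrict
  obtain ⟨g, hg⟩ := s.exists_extend
  refine ⟨g, LinearMap.ext fun v => ?_⟩
  have hgv : g (f v) = s (f.rangeRestrict v) := LinearMap.congr_fun hg (f.rangeRestrict v)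
  have hsv := congrArg Subtype.val (LinearMap.congr_fun hs (f.rangeRestrict v))
  simpa [hgv] using hsv

/-- Every matrix over a field has a generalized inverse. -/
theorem Matrix.exists_mul_mul_eq_self {K m n : Type*} [Field K] [Fintype m] [Fintype n]
    (A : Matrix m n K) : ∃ G : Matrix n m K, A * G * A = A := by
  classical
  obtain ⟨g, hg⟩ := (Matrix.toLin' A).exists_comp_comp_eq_self
  refine ⟨LinearMap.toMatrix' g, Matrix.toLin'.injective ?_⟩
  simpa [Matrix.toLin'_mul, LinearMap.comp_assoc] using hg

/-- Let `𝒳 : ι_l × ι_r × ι_c → ℂ` be a third-order tensor with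
matricizations `Xl ∈ ℂ^{ι_l × (ι_r × ι_c)}`, `Xl i_l (j_r, j_c) = 𝒳 i_l j_r j_c`, and
`Xr ∈ ℂ^{ι_r × (ι_l × ι_c)}`, `Xr i_r (j_l, j_c) = 𝒳 j_l i_r j_c`. Then there exists a
coefficient array `B` such that for all `i_l, i_r, i_c`,
`𝒳 i_l i_r i_c = Σ_{p ∈ ι_l×ι_c} Σ_{q ∈ ι_r×ι_c} Xl i_l q * Xr i_r p * B q p i_c`.
In particular every column of the `α`-matricization lies in the column span of the
Kronecker product `Xr ⊗ Xl`. -/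
theorem stmt2 {ιl ιr ιc : Type*} [Fintype ιl] [Fintype ιr] [Fintype ιc]
    (𝒳 : ιl → ιr → ιc → ℂ)
    (Xl : Matrix ιl (ιr × ιc) ℂ) (hXl : ∀ il jr jc, Xl il (jr, jc) = 𝒳 il jr jc)
    (Xr : Matrix ιr (ιl × ιc) ℂ) (hXr : ∀ ir jl jc, Xr ir (jl, jc) = 𝒳 jl ir jc) :
    ∃ B : (ιr × ιc) → (ιl × ιc) → ιc → ℂ,
      ∀ il ir ic, 𝒳 il ir ic =
        ∑ p : ιl × ιc, ∑ q : ιr × ιc, Xl il q * Xr ir p * B q p ic := by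
  obtain ⟨Gl, hGl⟩ := Xl.exists_mul_mul_eq_self
  obtain ⟨Gr, hGr⟩ := Xr.exists_mul_mul_eq_self
  let M : ιc → Matrix ιl ιr ℂ := fun c => Matrix.of fun i j => 𝒳 i j c
  have hl (c : ιc) : Xl * Gl * M c = M c := by
    ext i j
    have h := congrFun (congrFun hGl i) (j, c)
    simpa only [Matrix.mul_apply (M := Xl * Gl), M, Matrix.of_apply, hXl] using h
  have hr (c : ιc) : Xr * Gr * (M c).transpose = (M c).transpose := by
    ext j i
    have h := congrFun (congrFun hGr j) (i, c)
    simpa only [Matrix.mul_apply (M := Xr * Gr), M, Matrix.transpose_apply, Matrix.of_apply,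
      hXr] using h
  have hM (c : ιc) : M c = Xl * (Gl * M c * Gr.transpose) * Xr.transpose := by
    have h := congrArg Matrix.transpose (hr c)
    simp only [Matrix.transpose_mul, Matrix.transpose_transpose] at h
    calc M c = Xl * Gl * (M c * (Gr.transpose * Xr.transpose)) := by rw [h, hl]
      _ = _ := by simp only [Matrix.mul_assoc]
  refine ⟨fun q p c => (Gl * M c * Gr.transpose) q p, fun il ir ic => ?_⟩
  have h := congrFun (congrFun (hM ic) il) ir
  rw [Matrix.mul_apply] at h
  refine h.trans (Finset.sum_congr rfl fun p _ => ?_)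
  rw [Matrix.mul_apply, Finset.sum_mul]
  exact Finset.sum_congr rfl fun q _ => by rw [Matrix.transpose_apply]; ring
end

section
/- Let d ≥ 1 and let f : ℝ^d → ℝ be three times continuously differentiable with ‖D³f(x)‖ ≤ M for all x (operator norm of the third derivative). Let h_1,…,h_d > 0 with h := max_μ h_μ, and let x₀ ∈ ℝ^d. Define the quadratic polynomial p(x) = a₀ + Σ_μ a_μ ξ_μ + Σ_μ a_{μμ} ξ_μ² + Σ_{μ<ν} a_{μν} ξ_μ ξ_ν, with ξ_μ = (x_μ − x₀_μ)/h_μ, whose coefficients are built from exact point values of f on the stencil: a₀ = f(x₀), a_μ = (f(x₀+h_μ e_μ) − f(x₀−h_μ e_μ))/2, a_{μμ} = (f(x₀+h_μ e_μ) + f(x₀−h_μ e_μ))/2 − f(x₀), and a_{μν} = (1/4)( f(x₀+h_μ e_μ+h_ν e_ν) + f(x₀−h_μ e_μ−h_ν e_ν) − f(x₀+h_μ e_μ−h_ν e_ν) − f(x₀−h_μ e_μ+h_ν e_ν) ). Then there is a constant C depending only on d and M such that for every x with |x_μ − x₀_μ| ≤ h_μ/2 for all μ, one has |p(x) − f(x)|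 ≤ C h³. -/
section Taylor

variable {E : Type*} [NormedAddCommGroup E] [NormedSpace ℝ E]

set_option maxSynthPendingDepth 3 in
/-- The derivative of a `C³` function with third derivative bounded by `M` is approximated by
its first-order Taylor polynomial up to a quadratic error. -/
lemma norm_fderiv_sub_taylor_le {f : E → ℝ} {M : ℝ} (hf : ContDiff ℝ 3 f)
    (hM : ∀ x, ‖iteratedFDeriv ℝ 3 f x‖ ≤ M) (x v : E) :
    ‖fderiv ℝ f (x + v) - fderiv ℝ f x - fderiv ℝ (fderiv ℝ f) x v‖ ≤ M * ‖v‖ ^ 2 := by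
  have hf1 : ContDiff ℝ 2 (fderiv ℝ f) := hf.fderiv_right (by norm_num)
  have hf2 : ContDiff ℝ 1 (fderiv ℝ (fderiv ℝ f)) := hf1.fderiv_right (by norm_num)
  have hM0 : 0 ≤ M := (norm_nonneg _).trans (hM 0)
  have hM3 (y : E) : ‖fderiv ℝ (fderiv ℝ (fderiv ℝ f)) y‖ ≤ M := by
    rw [← norm_iteratedFDeriv_one, norm_iteratedFDeriv_fderiv, norm_iteratedFDeriv_fderiv]
    exact hM y
  have hlip (y : E) : ‖fderiv ℝ (fderiv ℝ f) y - fderiv ℝ (fderiv ℝ f) x‖ ≤ M * ‖y - x‖ :=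
    convex_univ.norm_image_sub_le_of_norm_fderiv_le
      (fun z _ => (hf2.differentiable one_ne_zero).differentiableAt)
      (fun z _ => hM3 z) (Set.mem_univ x) (Set.mem_univ y)
  have key := (convex_closedBall x ‖v‖).norm_image_sub_le_of_norm_hasFDerivWithin_le'
    (f := fderiv ℝ f) (f' := fderiv ℝ (fderiv ℝ f)) (φ := fderiv ℝ (fderiv ℝ f) x)
    (C := M * ‖v‖) (x := x) (y := x + v)
    (fun z _ => (hf1.differentiable two_ne_zero).differentiableAt.hasFDerivAt.hasFDerivWithinAt)
    (fun z hz => (hlip z).trans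
      (mul_le_mul_of_nonneg_left (mem_closedBall_iff_norm.1 hz) hM0))
    (by simp) (by simp)
  rw [add_sub_cancel_left] at key
  exact key.trans_eq (by ring)

/-- Second-order Taylor expansion with a cubic remainder estimate. -/
lemma abs_sub_taylor_two_le {f : E → ℝ} {M : ℝ} (hf : ContDiff ℝ 3 f)
    (hM : ∀ x, ‖iteratedFDeriv ℝ 3 f x‖ ≤ M) (x v : E) :
    |f (x + v) - f x - fderiv ℝ f x v - fderiv ℝ (fderiv ℝ f) x v v / 2| ≤ M * ‖v‖ ^ 3 := by
  have hM0 : 0 ≤ M := (norm_nonneg _).trans (hM 0)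
  set B := fderiv ℝ (fderiv ℝ f) x
  have hsymm (u w : E) : B u w = B w u :=
    (hf.contDiffAt.isSymmSndFDerivAt (by simp; norm_num)).eq u w
  have hderiv (w : E) : HasFDerivAt
      (fun w => f (x + w) - f x - fderiv ℝ f x w - B w w / 2)
      (fderiv ℝ f (x + w) - fderiv ℝ f x - B w) w := by
    have h1 : HasFDerivAt (fun w => f (x + w)) (fderiv ℝ f (x + w)) w :=
      (hasFDerivAt_comp_add_left x).2
        (hf.differentiable (by norm_num)).differentiableAt.hasFDerivAt
    have h2 : HasFDerivAt (fun w => B w w) (B w + B.flip w) w := by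
      refine (B.hasFDerivAt.clm_apply (hasFDerivAt_id w)).congr_fderiv ?_
      ext u
      simp
    have h3 := ((h1.sub_const (f x)).sub (fderiv ℝ f x).hasFDerivAt).sub (h2.mul_const (1 / 2))
    refine (h3.congr_fderiv ?_).congr_of_eventuallyEq (.of_forall fun u => ?_)
    · ext u
      simp [hsymm u w]
      ring
    · simp [div_eq_mul_inv]
  have key := (convex_closedBall (0 : E) ‖v‖).norm_image_sub_le_of_norm_hasFDerivWithin_le
    (C := M * ‖v‖ ^ 2) (x := 0) (y := v)
    (fun w _ => (hderiv w).hasFDerivWithinAt)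
    (fun w hw => (norm_fderiv_sub_taylor_le hf hM x w).trans
      (mul_le_mul_of_nonneg_left
        (pow_le_pow_left₀ (norm_nonneg _) (mem_closedBall_zero_iff.1 hw) 2) hM0))
    (by simp) (by simp)
  simp only [add_zero, sub_self, map_zero, zero_div, sub_zero, Real.norm_eq_abs] at key
  exact key.trans_eq (by ring)

/-- A sum of a symmetric array splits into its diagonal and twice its strict upper triangle. -/
lemma sum_sum_eq_diag_add_two_mul_upper {ι : Type*} [Fintype ι] [LinearOrder ι] (a : ι → ι → ℝ)
    (ha : ∀ i j, a i j = a j i) :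
    ∑ i, ∑ j, a i j = ∑ i, a i i + 2 * ∑ i, ∑ j, if i < j then a i j else 0 := by
  have hsplit (i j : ι) : a i j = (if i = j then a i j else 0) + (if i < j then a i j else 0)
      + (if j < i then a j i else 0) := by
    rcases lt_trichotomy i j with h | rfl | h
    · simp [h, h.ne, h.not_gt]
    · simp
    · simp [h, h.ne', h.not_gt, ha i j]
  calc ∑ i, ∑ j, a i j
      = ∑ i, ∑ j, ((if i = j then a i j else 0) + (if i < j then a i j else 0)
        + (if j < i then a j i else 0)) :=
        Finset.sum_congr rfl fun i _ => Finset.sum_congr rfl fun j _ => hsplit i j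
    _ = _ := by
        simp only [Finset.sum_add_distrib, Finset.sum_ite_eq, Finset.mem_univ, if_true]
        rw [Finset.sum_comm (f := fun i j => if j < i then a j i else 0)]
        ring

/-- The quadratic function with centered finite-difference coefficients of `f` along the
directions `s i`, evaluated at the displacement `∑ i, ξ i • s i` from `x`. -/
noncomputable def stencilQuadratic {ι : Type*} [Fintype ι] [LinearOrder ι] (f : E → ℝ) (x : E)
    (s : ι → E) (ξ : ι → ℝ) : ℝ :=
  f x + ∑ i, (f (x + s i) - f (x - s i)) / 2 * ξ i
    + ∑ i, ((f (x + s i) + f (x - s i)) / 2 - f x) * ξ i ^ 2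
    + ∑ i, ∑ j, if i < j then
        (1 / 4) * (f (x + s i + s j) + f (x - s i - s j) - f (x + s i - s j)
          - f (x - s i + s j)) * ξ i * ξ j
      else 0

/-- The stencil quadratic depends on `f` only through the Taylor remainder `R`, apart from the
Taylor polynomial, which it reproduces exactly. -/
lemma stencilQuadratic_eq_taylor_add {ι : Type*} [Fintype ι] [LinearOrder ι] {f R : E → ℝ}
    {x : E} {L : E →L[ℝ] ℝ} {B : E →L[ℝ] E →L[ℝ] ℝ} (hB : ∀ u w, B u w = B w u)
    (hR : ∀ v, f (x + v) = f x + L v + B v v / 2 + R v) (s : ι → E) (ξ : ι → ℝ) :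
    stencilQuadratic f x s ξ = f x + L (∑ i, ξ i • s i)
      + B (∑ i, ξ i • s i) (∑ i, ξ i • s i) / 2
      + ∑ i, (R (s i) - R (-s i)) / 2 * ξ i
      + ∑ i, (R (s i) + R (-s i)) / 2 * ξ i ^ 2
      + ∑ i, ∑ j, if i < j then
          (1 / 4) * (R (s i + s j) + R (-s i + -s j) - R (s i + -s j) - R (-s i + s j))
            * ξ i * ξ j
        else 0 := by
  have hL : L (∑ i, ξ i • s i) = ∑ i, L (s i) * ξ i := by
    simp [map_sum, mul_comm]
  have hBB : B (∑ i, ξ i • s i) (∑ i, ξ i • s i) = ∑ i, B (s i) (s i) * ξ i ^ 2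
      + 2 * ∑ i, ∑ j, if i < j then B (s i) (s j) * ξ i * ξ j else 0 := by
    have h := sum_sum_eq_diag_add_two_mul_upper (fun i j => B (s i) (s j) * ξ i * ξ j)
      (fun i j => by rw [hB]; ring)
    simp only [mul_assoc, ← pow_two] at h
    simp only [mul_assoc]
    rw [← h]
    simp only [map_sum, map_smul, sum_apply, smul_apply,
      smul_eq_mul, Finset.mul_sum]
    rw [Finset.sum_comm]
    exact Finset.sum_congr rfl fun i _ => Finset.sum_congr rfl fun j _ => by ring_nf
  have h1 : ∑ i, (f (x + s i) - f (x - s i)) / 2 * ξ i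
      = ∑ i, L (s i) * ξ i + ∑ i, (R (s i) - R (-s i)) / 2 * ξ i := by
    rw [← Finset.sum_add_distrib]
    refine Finset.sum_congr rfl fun i _ => ?_
    rw [sub_eq_add_neg x, hR, hR]
    simp only [map_neg, neg_apply]
    ring
  have h2 : ∑ i, ((f (x + s i) + f (x - s i)) / 2 - f x) * ξ i ^ 2
      = (∑ i, B (s i) (s i) * ξ i ^ 2) / 2 + ∑ i, (R (s i) + R (-s i)) / 2 * ξ i ^ 2 := by
    rw [Finset.sum_div, ← Finset.sum_add_distrib]
    refine Finset.sum_congr rfl fun i _ => ?_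
    rw [sub_eq_add_neg x, hR, hR]
    simp only [map_neg, neg_apply]
    ring
  have h3 : (∑ i, ∑ j, if i < j then
        (1 / 4) * (f (x + s i + s j) + f (x - s i - s j) - f (x + s i - s j)
          - f (x - s i + s j)) * ξ i * ξ j
      else 0) = (∑ i, ∑ j, if i < j then B (s i) (s j) * ξ i * ξ j else 0)
      + ∑ i, ∑ j, if i < j then
          (1 / 4) * (R (s i + s j) + R (-s i + -s j) - R (s i + -s j) - R (-s i + s j))
            * ξ i * ξ j
        else 0 := by
    simp only [← Finset.sum_add_distrib]
    refine Finset.sum_congr rfl fun i _ => Finset.sum_congr rfl fun j _ => ?_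
    split_ifs
    · simp only [sub_eq_add_neg, add_assoc x]
      rw [hR, hR, hR, hR]
      simp only [map_neg, map_add, neg_apply, add_apply,
        hB (s j) (s i)]
      ring
    · simp
  rw [stencilQuadratic, h1, h2, h3, hL, hBB]
  ring

/-- The stencil quadratic is a third-order accurate approximation of `f`. -/
lemma abs_stencilQuadratic_sub_le {ι : Type*} [Fintype ι] [LinearOrder ι] {f : E → ℝ} {M H : ℝ}
    (hf : ContDiff ℝ 3 f) (hM : ∀ x, ‖iteratedFDeriv ℝ 3 f x‖ ≤ M) (x : E) {s : ι → E}
    (hs : ∀ i, ‖s i‖ ≤ H) {ξ : ι → ℝ} (hξ : ∀ i, |ξ i| ≤ 1) :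
    |stencilQuadratic f x s ξ - f (x + ∑ i, ξ i • s i)|
      ≤ M * (2 * Fintype.card ι + 8 * Fintype.card ι ^ 2) * H ^ 3
        + M * ‖∑ i, ξ i • s i‖ ^ 3 := by
  have hM0 : 0 ≤ M := (norm_nonneg _).trans (hM 0)
  set R : E → ℝ := fun v =>
    f (x + v) - f x - fderiv ℝ f x v - fderiv ℝ (fderiv ℝ f) x v v / 2 with hRdef
  have hRle (v : E) : |R v| ≤ M * ‖v‖ ^ 3 := abs_sub_taylor_two_le hf hM x v
  have hR (v : E) : f (x + v)
      = f x + fderiv ℝ f x v + fderiv ℝ (fderiv ℝ f) x v v / 2 + R v := by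
    simp only [hRdef]; ring
  have hRle' {v : E} {r : ℝ} (hv : ‖v‖ ≤ r) : |R v| ≤ M * r ^ 3 :=
    (hRle v).trans (mul_le_mul_of_nonneg_left (pow_le_pow_left₀ (norm_nonneg _) hv 3) hM0)
  have hmul {a b c : ℝ} (ha : |a| ≤ c) (hb : |b| ≤ 1) : |a * b| ≤ c := by
    rw [abs_mul]
    exact (mul_le_of_le_one_right (abs_nonneg a) hb).trans ha
  have hs' (i : ι) : ‖-s i‖ ≤ H := (norm_neg _).trans_le (hs i)
  have h1 : |∑ i, (R (s i) - R (-s i)) / 2 * ξ i| ≤ Fintype.card ι * (M * H ^ 3) := by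
    rw [← nsmul_eq_mul]
    refine (Finset.abs_sum_le_sum_abs _ _).trans
      (Finset.sum_le_card_nsmul _ _ _ fun i _ => hmul ?_ (hξ i))
    have ha := abs_le.1 (hRle' (hs i))
    have hb := abs_le.1 (hRle' (hs' i))
    exact abs_le.2 ⟨by linarith, by linarith⟩
  have h2 : |∑ i, (R (s i) + R (-s i)) / 2 * ξ i ^ 2| ≤ Fintype.card ι * (M * H ^ 3) := by
    rw [← nsmul_eq_mul]
    refine (Finset.abs_sum_le_sum_abs _ _).trans
      (Finset.sum_le_card_nsmul _ _ _ fun i _ => hmul ?_ ?_)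
    · have ha := abs_le.1 (hRle' (hs i))
      have hb := abs_le.1 (hRle' (hs' i))
      exact abs_le.2 ⟨by linarith, by linarith⟩
    · rw [abs_pow]
      exact pow_le_one₀ (abs_nonneg _) (hξ i)
  have h3 : |∑ i, ∑ j, if i < j then
        (1 / 4) * (R (s i + s j) + R (-s i + -s j) - R (s i + -s j) - R (-s i + s j))
          * ξ i * ξ j
      else 0| ≤ Fintype.card ι * (Fintype.card ι * (M * (H + H) ^ 3)) := by
    rw [← nsmul_eq_mul, ← nsmul_eq_mul]
    refine (Finset.abs_sum_le_sum_abs _ _).trans (Finset.sum_le_card_nsmul _ _ _ fun i _ =>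
      (Finset.abs_sum_le_sum_abs _ _).trans (Finset.sum_le_card_nsmul _ _ _ fun j _ => ?_))
    have hH : 0 ≤ H := (norm_nonneg _).trans (hs i)
    split_ifs
    · refine hmul (hmul ?_ (hξ i)) (hξ j)
      have ha := abs_le.1 (hRle' (norm_add_le_of_le (hs i) (hs j)))
      have hb := abs_le.1 (hRle' (norm_add_le_of_le (hs' i) (hs' j)))
      have hc := abs_le.1 (hRle' (norm_add_le_of_le (hs i) (hs' j)))
      have hd := abs_le.1 (hRle' (norm_add_le_of_le (hs' i) (hs j)))
      exact abs_le.2 ⟨by linarith, by linarith⟩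
    · rw [abs_zero]
      positivity
  have h4 := abs_le.1 (hRle (∑ i, ξ i • s i))
  rw [stencilQuadratic_eq_taylor_add
    (fun u w => (hf.contDiffAt.isSymmSndFDerivAt (by simp; norm_num)).eq u w) hR, hR]
  rw [abs_le] at h1 h2 h3
  refine abs_le.2 ⟨?_, ?_⟩ <;> linarith

end Taylor


/-- Let `d ≥ 1` and `f : ℝ^d → ℝ` be three times continuously
differentiable with `‖D³f x‖ ≤ M` for all `x`. Let `h μ > 0` with maximum `H`, and
`x₀ ∈ ℝ^d`. Let `p` be the quadratic polynomial in the normalized coordinates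
`ξ μ = (x μ - x₀ μ)/h μ` whose coefficients are the centered finite-difference
formulas built from exact point values of `f` on the stencil around `x₀`. Then there
is a constant `C` depending only on `d` and `M` such that for every `x` with
`|x μ - x₀ μ| ≤ h μ / 2` for all `μ`, one has `|p x - f x| ≤ C * H ^ 3`. -/
theorem stmt8 (d : ℕ) (hd : 1 ≤ d) (M : ℝ) :
    ∃ C : ℝ, ∀ (f : (Fin d → ℝ) → ℝ), ContDiff ℝ 3 f →
      (∀ x, ‖iteratedFDeriv ℝ 3 f x‖ ≤ M) →
      ∀ (h : Fin d → ℝ), (∀ μ, 0 < h μ) →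
      ∀ (H : ℝ), IsGreatest (Set.range h) H →
      ∀ (x₀ x : Fin d → ℝ), (∀ μ, |x μ - x₀ μ| ≤ h μ / 2) →
        |(f x₀
          + ∑ μ, (f (x₀ + Pi.single μ (h μ)) - f (x₀ - Pi.single μ (h μ))) / 2
              * ((x μ - x₀ μ) / h μ)
          + ∑ μ, ((f (x₀ + Pi.single μ (h μ)) + f (x₀ - Pi.single μ (h μ))) / 2 - f x₀)
              * ((x μ - x₀ μ) / h μ) ^ 2
          + ∑ μ, ∑ ν, (if μ < ν then
              (1 / 4) * (f (x₀ + Pi.single μ (h μ) + Pi.single ν (h ν))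
                  + f (x₀ - Pi.single μ (h μ) - Pi.single ν (h ν))
                  - f (x₀ + Pi.single μ (h μ) - Pi.single ν (h ν))
                  - f (x₀ - Pi.single μ (h μ) + Pi.single ν (h ν)))
                * ((x μ - x₀ μ) / h μ) * ((x ν - x₀ ν) / h ν)
            else 0))
          - f x| ≤ C * H ^ 3 := by
  refine ⟨M * (2 * d + 8 * d ^ 2) + M, fun f hf hM h hh H hH x₀ x hx => ?_⟩
  have hM0 : 0 ≤ M := (norm_nonneg _).trans (hM 0)
  have hle (μ : Fin d) : h μ ≤ H := hH.2 ⟨μ, rfl⟩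
  have hH0 : 0 ≤ H := (hh ⟨0, hd⟩).le.trans (hle _)
  have hv : ∑ μ, ((x μ - x₀ μ) / h μ) • (Pi.single μ (h μ) : Fin d → ℝ) = x - x₀ := by
    have hsmul (μ : Fin d) : ((x μ - x₀ μ) / h μ) • (Pi.single μ (h μ) : Fin d → ℝ)
        = Pi.single μ ((x - x₀) μ) := by
      rw [← Pi.single_smul, smul_eq_mul, div_mul_cancel₀ _ (hh μ).ne', Pi.sub_apply]
    simp only [hsmul, Finset.univ_sum_single]
  have hnorm : ‖x - x₀‖ ≤ H := (pi_norm_le_iff_of_nonneg hH0).2 fun μ => by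
    rw [Pi.sub_apply, Real.norm_eq_abs]
    linarith [hx μ, hle μ, hh μ]
  have key := abs_stencilQuadratic_sub_le hf hM x₀ (H := H)
    (s := fun μ => Pi.single μ (h μ)) (ξ := fun μ => (x μ - x₀ μ) / h μ)
    (fun μ => by
      rw [Pi.norm_single, Real.norm_eq_abs, abs_of_pos (hh μ)]
      exact hle μ)
    (fun μ => by
      rw [abs_div, abs_of_pos (hh μ), div_le_one (hh μ)]
      linarith [hx μ, hh μ])
  rw [hv, add_sub_cancel, Fintype.card_fin] at key
  refine key.trans ?_
  have hcube := mul_le_mul_of_nonneg_left (pow_le_pow_left₀ (norm_nonneg _) hnorm 3) hM0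
  linarith
end

section
/- Let A and A' be m × n matrices over a field, let R = A − A', and suppose R(i₀, j₀) ≠ 0 for some indices i₀, j₀. Define the rank-one corrected matrix A'' by A''(i,j) = A'(i,j) + R(i,j₀)·R(i₀,j)/R(i₀,j₀). Then the new residual R'' = A − A'' satisfies: (1) R''(i₀, j) = 0 for all j and R''(i, j₀) = 0 for all i; (2) if some row i' of R is identically zero, then row i' of R'' is identically zero, and if some column j' of R is identically zero, then column j' of R'' is identically zero. -/
/-- Let `A, A'` be `m × n` matrices over a field, `R = A - A'`, and
suppose `R i₀ j₀ ≠ 0`. Define the rank-one corrected matrix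
`A'' i j = A' i j + R i j₀ * R i₀ j / R i₀ j₀` and the new residual `R'' = A - A''`.
Then (1) `R'' i₀ j = 0` for all `j` and `R'' i j₀ = 0` for all `i`; and
(2) if a row (resp. column) of `R` is identically zero, then the same row
(resp. column) of `R''` is identically zero. -/
theorem stmt10 {𝔽 : Type*} [Field 𝔽] {m n : Type*}
    (A A' R A'' R'' : Matrix m n 𝔽)
    (hR : ∀ i j, R i j = A i j - A' i j)
    (i₀ : m) (j₀ : n) (hpiv : R i₀ j₀ ≠ 0)
    (hA'' : ∀ i j, A'' i j = A' i j + R i j₀ * R i₀ j / R i₀ j₀)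
    (hR'' : ∀ i j, R'' i j = A i j - A'' i j) :
    (∀ j, R'' i₀ j = 0) ∧ (∀ i, R'' i j₀ = 0) ∧
    (∀ i', (∀ j, R i' j = 0) → ∀ j, R'' i' j = 0) ∧
    (∀ j', (∀ i, R i j' = 0) → ∀ i, R'' i j' = 0) := by
  have key : ∀ i j, R'' i j = R i j - R i j₀ * R i₀ j / R i₀ j₀ := fun i j => by
    rw [hR'', hA'', hR i j, sub_add_eq_sub_sub]
  refine ⟨fun j => ?_, fun i => ?_, fun i' h j => ?_, fun j' h i => ?_⟩
  · rw [key, mul_div_cancel_left₀ _ hpiv, sub_self]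
  · rw [key, mul_div_cancel_right₀ _ hpiv, sub_self]
  · rw [key, h j, h j₀, zero_mul, zero_div, sub_zero]
  · rw [key, h i, h i₀, mul_zero, zero_div, sub_zero]
end

section
/- Let A be an m × n matrix over a field. Define the ACA iterates by A₀ = 0 and, for ℓ = 1,…,k, A_ℓ(i,j) = A_{ℓ−1}(i,j) + R_{ℓ−1}(i,j_ℓ)·R_{ℓ−1}(i_ℓ,j)/R_{ℓ−1}(i_ℓ,j_ℓ), where R_{ℓ−1} = A − A_{ℓ−1} and each pivot satisfies R_{ℓ−1}(i_ℓ, j_ℓ) ≠ 0. Then the k-step approximation interpolates A on all selected cross sections: A_k(i_ℓ, j) = A(i_ℓ, j) for all j and all ℓ ≤ k, and A_k(i, j_ℓ) = A(i, j_ℓ) for all i and all ℓ ≤ k. -/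
/-- Let `A` be an `m × n` matrix over a field. Define the ACA
iterates by `B 0 = 0` and, for `ℓ = 0,…,k-1`,
`B (ℓ+1) i j = B ℓ i j + R ℓ i (pj (ℓ+1)) * R ℓ (pi (ℓ+1)) j / R ℓ (pi (ℓ+1)) (pj (ℓ+1))`
where `R ℓ = A - B ℓ` and each pivot value `R ℓ (pi (ℓ+1)) (pj (ℓ+1))` is nonzero.
Then the `k`-step approximation interpolates `A` on all selected cross sections:
`B k (pi ℓ) j = A (pi ℓ) j` and `B k i (pj ℓ) = A i (pj ℓ)` for all `1 ≤ ℓ ≤ k`. -/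
theorem stmt11 {𝔽 : Type*} [Field 𝔽] {m n : Type*}
    (A : Matrix m n 𝔽) (k : ℕ) (B : ℕ → Matrix m n 𝔽)
    (pi : ℕ → m) (pj : ℕ → n)
    (hB0 : B 0 = 0)
    (hpiv : ∀ ℓ < k, (A - B ℓ) (pi (ℓ + 1)) (pj (ℓ + 1)) ≠ 0)
    (hrec : ∀ ℓ < k, ∀ i j, B (ℓ + 1) i j = B ℓ i j
        + (A - B ℓ) i (pj (ℓ + 1)) * (A - B ℓ) (pi (ℓ + 1)) j
          / (A - B ℓ) (pi (ℓ + 1)) (pj (ℓ + 1))) :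
    (∀ ℓ, 1 ≤ ℓ → ℓ ≤ k → ∀ j, B k (pi ℓ) j = A (pi ℓ) j) ∧
    (∀ ℓ, 1 ≤ ℓ → ℓ ≤ k → ∀ i, B k i (pj ℓ) = A i (pj ℓ)) := by
  clear hB0
  induction k with
  | zero => exact ⟨fun ℓ h1 h2 => by omega, fun ℓ h1 h2 => by omega⟩
  | succ k ih =>
    obtain ⟨ihrow, ihcol⟩ := ih (fun ℓ hℓ => hpiv ℓ (by omega)) (fun ℓ hℓ => hrec ℓ (by omega))
    have hp := hpiv k k.lt_succ_self
    have hr := hrec k k.lt_succ_self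
    refine ⟨fun ℓ h1 h2 j => ?_, fun ℓ h1 h2 i => ?_⟩
    · rw [hr]
      rcases Nat.le_succ_iff.mp h2 with h | rfl
      · simp [ihrow ℓ h1 h]
      · rw [mul_div_cancel_left₀ _ hp, Matrix.sub_apply, add_sub_cancel]
    · rw [hr]
      rcases Nat.le_succ_iff.mp h2 with h | rfl
      · simp [ihcol ℓ h1 h]
      · rw [mul_div_cancel_right₀ _ hp, Matrix.sub_apply, add_sub_cancel]
end
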